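/- Let R be a commutative semiring, V a type, μ : V → V → R a matrix with zero diagonal, and u, v, w ∈ V distinct. Then contracting {v,w} commutes with the detour at u: the matrices (μ↑u)/{v,w} and (μ/{v,w})↑u on V \ {w} are equal. -/

import Mathlib

/-- The detour of a weighted digraph `μ` (a matrix with zero diagonal over a
commutative semiring) at a vertex `v`. -/
def wdetour {R V : Type*} [CommSemiring R] [DecidableEq V]
    (μ : V → V → R) (v : V) : V → V → R :=
  fun x y => if x = v ∨ y = v ∨ x = y then 0 else μ x y + μ x v * μ v y

/-- The contraction `μ/{v,w}` of a weighted digraph at two distinct vertices `v, w`: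
the matrix on `V \ {w}` obtained by identifying `w` with `v`, adding the
corresponding weights. -/
def wcontract {R V : Type*} [CommSemiring R] [DecidableEq V]
    (μ : V → V → R) (v w : V) : {x : V // x ≠ w} → {x : V // x ≠ w} → R :=
  fun x y =>
    if x.val = v then
      if y.val = v then 0 else μ v y.val + μ w y.val
    else if y.val = v then μ x.val v + μ x.val w
    else μ x.val y.val

section Detour

variable {R V : Type*} [CommSemiring R] [DecidableEq V] (μ : V → V → R)

theorem wdetour_apply_left (v y : V) : wdetour μ v v y = 0 :=
  if_pos (.inl rfl)

theorem wdetour_apply_right (v x : V) : wdetour μ v x v = 0 :=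
  if_pos (.inr (.inl rfl))

theorem wdetour_apply_self (v x : V) : wdetour μ v x x = 0 :=
  if_pos (.inr (.inr rfl))

theorem wdetour_apply_of_ne {v x y : V} (hxv : x ≠ v) (hyv : y ≠ v) (hxy : x ≠ y) :
    wdetour μ v x y = μ x y + μ x v * μ v y :=
  if_neg (by simp only [hxv, hyv, hxy, or_self, not_false_eq_true])

end Detour

section Contraction

variable {R V : Type*} [CommSemiring R] [DecidableEq V] {μ : V → V → R} {v w : V}

theorem wcontract_apply_of_ne {x y : {x : V // x ≠ w}} (hxv : x.val ≠ v) (hyv : y.val ≠ v) :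
    wcontract μ v w x y = μ x y := by
  simp only [wcontract, hxv, hyv, if_false]

theorem wcontract_apply_left_of_ne (hvw : v ≠ w) {y : {x : V // x ≠ w}} (hyv : y.val ≠ v) :
    wcontract μ v w ⟨v, hvw⟩ y = μ v y + μ w y := by
  simp only [wcontract, hyv, if_true, if_false]

theorem wcontract_apply_right_of_ne (hvw : v ≠ w) {x : {x : V // x ≠ w}} (hxv : x.val ≠ v) :
    wcontract μ v w x ⟨v, hvw⟩ = μ x v + μ x w := by
  simp only [wcontract, hxv, if_true, if_false]

theorem wcontract_apply_self (hμ : ∀ x, μ x x = 0) (x : {x : V // x ≠ w}) :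
    wcontract μ v w x x = 0 := by
  by_cases hxv : x.val = v
  · simp only [wcontract, hxv, if_true]
  · rw [wcontract_apply_of_ne hxv hxv, hμ]

theorem wcontract_apply_eq_zero_of_row_eq_zero {x : {x : V // x ≠ w}} (hxv : x.val ≠ v)
    (hrow : ∀ y, μ x y = 0) (y : {x : V // x ≠ w}) : wcontract μ v w x y = 0 := by
  obtain ⟨y, hyw⟩ := y
  obtain rfl | hyv := eq_or_ne y v
  · rw [wcontract_apply_right_of_ne hyw hxv, hrow, hrow, add_zero]
  · rw [wcontract_apply_of_ne hxv hyv, hrow]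

theorem wcontract_apply_eq_zero_of_col_eq_zero {y : {x : V // x ≠ w}} (hyv : y.val ≠ v)
    (hcol : ∀ x, μ x y = 0) (x : {x : V // x ≠ w}) : wcontract μ v w x y = 0 := by
  obtain ⟨x, hxw⟩ := x
  obtain rfl | hxv := eq_or_ne x v
  · rw [wcontract_apply_left_of_ne hxw hyv, hcol, hcol, add_zero]
  · rw [wcontract_apply_of_ne hxv hyv, hcol]

end Contraction

section ContractDetour

variable {R V : Type*} [CommSemiring R] [DecidableEq V] {μ : V → V → R} {v w : V}
  {u x y : {x : V // x ≠ w}}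

-- As `u` is not merged, the detours from `v` and from `w` to `y` share the last weight `μ u y`,
-- which factors out of their sum.
theorem wcontract_wdetour_apply_left_of_ne (hvw : v ≠ w) (huv : u.val ≠ v) (hyu : y ≠ u)
    (hyv : y.val ≠ v) :
    wcontract (wdetour μ u) v w ⟨v, hvw⟩ y =
      wcontract μ v w ⟨v, hvw⟩ y + wcontract μ v w ⟨v, hvw⟩ u * wcontract μ v w u y := by
  have hyu' : y.val ≠ u := Subtype.coe_ne_coe.mpr hyu
  calc wcontract (wdetour μ u) v w ⟨v, hvw⟩ y
      = wdetour μ u v y + wdetour μ u w y := wcontract_apply_left_of_ne hvw hyv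
    _ = (μ v y + μ v u * μ u y) + (μ w y + μ w u * μ u y) := by
        rw [wdetour_apply_of_ne μ huv.symm hyu' hyv.symm,
          wdetour_apply_of_ne μ u.prop.symm hyu' y.prop.symm]
    _ = (μ v y + μ w y) + (μ v u + μ w u) * μ u y := by rw [add_mul, add_add_add_comm]
    _ = wcontract μ v w ⟨v, hvw⟩ y + wcontract μ v w ⟨v, hvw⟩ u * wcontract μ v w u y := by
        rw [wcontract_apply_left_of_ne hvw hyv, wcontract_apply_left_of_ne hvw huv,
          wcontract_apply_of_ne huv hyv]

theorem wcontract_wdetour_apply_right_of_ne (hvw : v ≠ w) (huv : u.val ≠ v) (hxu : x ≠ u)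
    (hxv : x.val ≠ v) :
    wcontract (wdetour μ u) v w x ⟨v, hvw⟩ =
      wcontract μ v w x ⟨v, hvw⟩ + wcontract μ v w x u * wcontract μ v w u ⟨v, hvw⟩ := by
  have hxu' : x.val ≠ u := Subtype.coe_ne_coe.mpr hxu
  calc wcontract (wdetour μ u) v w x ⟨v, hvw⟩
      = wdetour μ u x v + wdetour μ u x w := wcontract_apply_right_of_ne hvw hxv
    _ = (μ x v + μ x u * μ u v) + (μ x w + μ x u * μ u w) := by
        rw [wdetour_apply_of_ne μ hxu' huv.symm hxv,
          wdetour_apply_of_ne μ hxu' u.prop.symm x.prop]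
    _ = (μ x v + μ x w) + μ x u * (μ u v + μ u w) := by rw [mul_add, add_add_add_comm]
    _ = wcontract μ v w x ⟨v, hvw⟩ + wcontract μ v w x u * wcontract μ v w u ⟨v, hvw⟩ := by
        rw [wcontract_apply_right_of_ne hvw hxv, wcontract_apply_right_of_ne hvw huv,
          wcontract_apply_of_ne hxv huv]

theorem wcontract_wdetour_apply_of_ne (huv : u.val ≠ v) (hxu : x ≠ u) (hyu : y ≠ u)
    (hxy : x ≠ y) :
    wcontract (wdetour μ u) v w x y =
      wcontract μ v w x y + wcontract μ v w x u * wcontract μ v w u y := by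
  by_cases hxv : x.val = v
  · obtain ⟨x, hxw⟩ := x
    obtain rfl : x = v := hxv
    have hyx : y.val ≠ x := fun h => hxy (Subtype.ext h.symm)
    exact wcontract_wdetour_apply_left_of_ne hxw huv hyu hyx
  by_cases hyv : y.val = v
  · obtain ⟨y, hyw⟩ := y
    obtain rfl : y = v := hyv
    exact wcontract_wdetour_apply_right_of_ne hyw huv hxu hxv
  rw [wcontract_apply_of_ne hxv hyv, wcontract_apply_of_ne hxv hyv,
    wcontract_apply_of_ne hxv huv, wcontract_apply_of_ne huv hyv,
    wdetour_apply_of_ne μ (Subtype.coe_ne_coe.mpr hxu) (Subtype.coe_ne_coe.mpr hyu)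
      (Subtype.coe_ne_coe.mpr hxy)]

end ContractDetour

/-- Contracting `{v,w}` commutes with the detour at `u`:
`(μ↑u)/{v,w} = (μ/{v,w})↑u` as matrices on `V \ {w}`. -/
theorem wcontract_wdetour_comm {R V : Type*} [CommSemiring R] [DecidableEq V]
    (μ : V → V → R) (hdiag : ∀ x, μ x x = 0)
    (u v w : V) (huv : u ≠ v) (hvw : v ≠ w) (huw : u ≠ w) :
    wcontract (wdetour μ u) v w = wdetour (wcontract μ v w) ⟨u, huw⟩ := by
  ext x y
  obtain rfl | hxu := eq_or_ne x ⟨u, huw⟩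
  · rw [wcontract_apply_eq_zero_of_row_eq_zero huv (wdetour_apply_left μ u), wdetour_apply_left]
  obtain rfl | hyu := eq_or_ne y ⟨u, huw⟩
  · rw [wcontract_apply_eq_zero_of_col_eq_zero huv (wdetour_apply_right μ u), wdetour_apply_right]
  obtain rfl | hxy := eq_or_ne x y
  · rw [wcontract_apply_self (wdetour_apply_self μ u), wdetour_apply_self]
  rw [wdetour_apply_of_ne _ hxu hyu hxy]
  exact wcontract_wdetour_apply_of_ne huv hxu hyu hxy
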